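/- Let σ : A* → A* be a primitive substitution prolongable on the letter a, let x = σ^ω(a), and let u be a nonempty prefix of x. Then there is a unique substitution σ_u : R_{x,u}* → R_{x,u}* satisfying Θ_{x,u} ∘ σ_u = σ ∘ Θ_{x,u}, and the derived sequence D_u(x) is the unique fixed point of σ_u. -/

import Mathlib

/-!
The argument rests on the fact that return words to `u` form a code with bounded look-ahead: if
`r` and `r'` are return words and `r ++ u`, `r' ++ u` are prefixes of a common word, then `r = r'`,
since otherwise `u` would occur strictly between two successive occurrences. Hence `Θ` is injective
on words over the derived alphabet, and even reflects the prefix order once images are completed by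
`u` (`isPrefix_of_theta`).

Primitivity and `|σⁿ(a)| → ∞` make every prefix `u` of `x` recurrent (`exists_occursAt_ge`), so `x`
is an infinite concatenation of return words. Since `u` is a prefix of `σ(u)`, the substitution maps
the cutting points of this decomposition to cutting points (`exists_occSeq_eq_apply`); thus `σ` of a
return word is a concatenation of return words, which gives `σ_u`. Its uniqueness, and the fact that
`D_u(x)` is fixed by it, follow from injectivity of `Θ`.

If `z` is any fixed point of `σ_u`, the images `Θ(z₀⋯zₘ)` begin with the letter `a`, and applying `σ`
repeatedly shows that they begin with `σᴺ(a)` for every `N` when `m` is large. So they are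
prefixes of `x`, and unique decoding yields `z = D_u(x)` (`eq_derivedSeq`).
-/

namespace Rauzy

variable {A B Γ : Type*}

/-- The factor `x_[i, i+n)` of length `n` of the sequence `x`, starting at position `i`. -/
def factorAt (x : ℕ → A) (i n : ℕ) : List A :=
  (List.range n).map fun k => x (i + k)

/-- The word `w` occurs in the sequence `x` at position `i`. -/
def OccursAt (x : ℕ → A) (w : List A) (i : ℕ) : Prop :=
  factorAt x i w.length = w

/-- The word `w` is a factor of the sequence `x`. -/
def IsFactor (x : ℕ → A) (w : List A) : Prop :=
  ∃ i, OccursAt x w i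

/-- The word `w` is a prefix of the sequence `x`. -/
def IsPrefixSeq (x : ℕ → A) (w : List A) : Prop :=
  OccursAt x w 0

/-- The sequence `x` is uniformly recurrent: every factor occurs with bounded gaps. -/
def UniformlyRecurrent (x : ℕ → A) : Prop :=
  ∀ w : List A, IsFactor x w → ∃ N, ∀ i, ∃ j, i ≤ j ∧ j < i + N ∧ OccursAt x w j

/-- `i < j` are two successive occurrences of `u` in `x`. -/
def SuccessiveOccs (x : ℕ → A) (u : List A) (i j : ℕ) : Prop :=
  i < j ∧ OccursAt x u i ∧ OccursAt x u j ∧ ∀ k, i < k → k < j → ¬ OccursAt x u k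

/-- The word `w` is a return word to `u` in `x`. -/
def IsReturnWord (x : ℕ → A) (u w : List A) : Prop :=
  ∃ i j, SuccessiveOccs x u i j ∧ w = factorAt x i (j - i)

/-- The set `ℛ_{x,u}` of return words to `u` in `x`. -/
def returnWords (x : ℕ → A) (u : List A) : Set (List A) :=
  {w | IsReturnWord x u w}

/-- The next occurrence of `u` in `x` strictly after position `i`. -/
noncomputable def nextOcc (x : ℕ → A) (u : List A) (i : ℕ) : ℕ :=
  sInf {j | i < j ∧ OccursAt x u j}

/-- The increasing enumeration of the occurrences of the prefix `u` in `x`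
(position `0` is an occurrence since `u` is a prefix). -/
noncomputable def occSeq (x : ℕ → A) (u : List A) : ℕ → ℕ
  | 0 => 0
  | n + 1 => nextOcc x u (occSeq x u n)

/-- The `n`-th return word `mₙ` in the decomposition `x = m₀m₁m₂⋯` of `x`
into return words to the prefix `u`. -/
noncomputable def retWord (x : ℕ → A) (u : List A) (n : ℕ) : List A :=
  factorAt x (occSeq x u n) (occSeq x u (n + 1) - occSeq x u n)

/-- The first index `n` such that `mₙ = w` in the decomposition of `x` into
return words to `u`. -/
noncomputable def firstIdx (x : ℕ → A) (u w : List A) : ℕ :=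
  sInf {n | retWord x u n = w}

open Classical in
/-- The derived sequence `D_u(x)` of `x` on the prefix `u`, with the return words
labelled `0, 1, 2, …` in the order of their first appearance in the decomposition
`x = m₀m₁m₂⋯` : the label of `mₙ` is the number of distinct return words appearing
strictly before the first occurrence of `mₙ`. -/
noncomputable def derivedSeq (x : ℕ → A) (u : List A) (n : ℕ) : ℕ :=
  ((Finset.range (firstIdx x u (retWord x u n))).image (retWord x u)).card

/-- The alphabet `R_{x,u} = {0, …, #ℛ_{x,u} - 1} ⊆ ℕ` of the derived sequence. -/
def derivedAlphabet (x : ℕ → A) (u : List A) : Set ℕ :=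
  Set.range (derivedSeq x u)

/-- The morphism `Θ_{x,u}` on letters: the return word labelled `k`. -/
noncomputable def thetaLetter (x : ℕ → A) (u : List A) (k : ℕ) : List A :=
  retWord x u (sInf {n | derivedSeq x u n = k})

/-- The canonical extension of a letter-to-word map to a monoid morphism on words. -/
def apply (f : A → List B) (w : List A) : List B :=
  (w.map f).flatten

/-- The morphism `Θ_{x,u} : R_{x,u}* → A*` on words. -/
noncomputable def theta (x : ℕ → A) (u : List A) (l : List ℕ) : List A :=
  apply (thetaLetter x u) l

/-- `y = f(x)` for an infinite sequence `x`: the image under `f` of every prefix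
of `x` is a prefix of `y`. -/
def SeqImage (f : A → List B) (x : ℕ → A) (y : ℕ → B) : Prop :=
  ∀ n, IsPrefixSeq y (apply f (factorAt x 0 n))

/-- The iterate `σⁿ` of a substitution, on letters. -/
def substIter (σ : A → List A) : ℕ → A → List A
  | 0 => fun a => [a]
  | n + 1 => fun a => apply σ (substIter σ n a)

/-- `σ` is prolongable on the letter `a`: `σ(a) = a·w` with `w` nonempty, and
`|σⁿ(a)| → ∞`. -/
def Prolongable (σ : A → List A) (a : A) : Prop :=
  (∃ w : List A, w ≠ [] ∧ σ a = a :: w) ∧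
    Filter.Tendsto (fun n => (substIter σ n a).length) Filter.atTop Filter.atTop

/-- The incidence matrix of a substitution: entry `(i, j)` is the number of
occurrences of the letter `i` in `σ(j)`. -/
def incMatrix [Fintype A] [DecidableEq A] (σ : A → List A) : Matrix A A ℕ :=
  Matrix.of fun i j => (σ j).count i

/-- A substitution is primitive if some power of its incidence matrix has all
entries strictly positive. -/
def Primitive [Fintype A] [DecidableEq A] (σ : A → List A) : Prop :=
  ∃ k, 0 < k ∧ ∀ i j, 0 < (incMatrix σ ^ k) i j

/-- The sequence `x` is (purely) periodic. -/
def IsPeriodic (x : ℕ → A) : Prop :=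
  ∃ p, 0 < p ∧ ∀ n, x (n + p) = x n

/-- The sequence `x` is ultimately periodic. -/
def IsUltimatelyPeriodic (x : ℕ → A) : Prop :=
  ∃ N p, 0 < p ∧ ∀ n, N ≤ n → x (n + p) = x n

/-- `|σ| = max_{a ∈ A} |σ(a)|`. -/
def mSize [Fintype A] (σ : A → List A) : ℕ :=
  Finset.univ.sup fun a => (σ a).length

/-- `min_{a ∈ A} |σ(a)|`. -/
noncomputable def minSize [Fintype A] [Nonempty A] (σ : A → List A) : ℕ :=
  Finset.univ.inf' Finset.univ_nonempty fun a => (σ a).length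

/-- `R_σ`: the maximal difference between two successive occurrences of a word of
length 2 in any fixed point of `σ`. -/
noncomputable def Rconst (σ : A → List A) : ℕ :=
  sSup {r | ∃ x : ℕ → A, SeqImage σ x x ∧
    ∃ w i j, w.length = 2 ∧ SuccessiveOccs x w i j ∧ r = j - i}

/-- `Q_σ = max( max_{0 ≤ n ≤ (d−1)d^d + 1} |σⁿ| / min_{a∈A} |σⁿ(a)| , |σ| )`. -/
noncomputable def Qconst [Fintype A] [Nonempty A] (σ : A → List A) : ℝ :=
  max
    ((Finset.range ((Fintype.card A - 1) * Fintype.card A ^ Fintype.card A + 2)).sup'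
      (Finset.nonempty_range_iff.mpr (by omega))
      fun n => (mSize (substIter σ n) : ℝ) / (minSize (substIter σ n) : ℝ))
    (mSize σ : ℝ)

/-- `K_σ = Q_σ · R_σ · |σ|`. -/
noncomputable def Kconst [Fintype A] [Nonempty A] (σ : A → List A) : ℝ :=
  Qconst σ * Rconst σ * mSize σ

/-- The index `m` such that `occSeq x u m = L`, i.e. the number of complete return
words to `u` composing the prefix of length `L` of `x`. -/
noncomputable def posIdx (x : ℕ → A) (u : List A) (L : ℕ) : ℕ :=
  sInf {m | occSeq x u m = L}

/-- The return substitution `σ_u : R_{x,u}* → R_{x,u}*`, on letters: it is the unique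
substitution satisfying `Θ_{x,u} ∘ σ_u = σ ∘ Θ_{x,u}`. -/
noncomputable def returnSubst (σ : A → List A) (x : ℕ → A) (u : List A) (k : ℕ) : List ℕ :=
  let n := sInf {n | derivedSeq x u n = k}
  let p := posIdx x u (apply σ (factorAt x 0 (occSeq x u n))).length
  let q := posIdx x u (apply σ (factorAt x 0 (occSeq x u (n + 1)))).length
  (List.range (q - p)).map fun t => derivedSeq x u (p + t)

/-- For a coding `φ`, the morphism `λ_u : R_{x,u}* → R_{φ(x),φ(u)}*`, on letters:
it is the unique morphism satisfying `φ ∘ Θ_{x,u} = Θ_{φ(x),φ(u)} ∘ λ_u`. -/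
noncomputable def lambdaMorph (φ : A → B) (x : ℕ → A) (u : List A) (k : ℕ) : List ℕ :=
  let n := sInf {n | derivedSeq x u n = k}
  let p := posIdx (fun i => φ (x i)) (u.map φ) (occSeq x u n)
  let q := posIdx (fun i => φ (x i)) (u.map φ) (occSeq x u (n + 1))
  (List.range (q - p)).map fun t => derivedSeq (fun i => φ (x i)) (u.map φ) (p + t)

/-- The Parikh vector (abelianization) of a word. -/
def parikh [DecidableEq A] (w : List A) : A → ℤ :=
  fun b => (w.count b : ℤ)


/-! ### Words and morphisms -/

@[simp] lemma apply_nil (f : A → List B) : apply f [] = [] := rfl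

@[simp] lemma apply_cons (f : A → List B) (c : A) (w : List A) :
    apply f (c :: w) = f c ++ apply f w := by simp [apply]

@[simp] lemma apply_append (f : A → List B) (v w : List A) :
    apply f (v ++ w) = apply f v ++ apply f w := by simp [apply]

lemma apply_apply (f : B → List Γ) (g : A → List B) (w : List A) :
    apply f (apply g w) = apply (fun c => apply f (g c)) w := by
  induction w with
  | nil => rfl
  | cons c w ih => simp [ih]

lemma apply_singleton_fun (w : List A) : apply (fun c => [c]) w = w := by
  induction w with
  | nil => rfl
  | cons c w ih => simp [ih]

lemma apply_isPrefix (f : A → List B) {v w : List A} (h : v <+: w) : apply f v <+: apply f w := by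
  obtain ⟨t, rfl⟩ := h
  simp

lemma length_le_apply (f : A → List B) {w : List A} (hf : ∀ c ∈ w, f c ≠ []) :
    w.length ≤ (apply f w).length := by
  induction w with
  | nil => simp
  | cons c w ih =>
    have h1 : 0 < (f c).length := List.length_pos_iff.2 (hf c (by simp))
    have h2 := ih fun d hd => hf d (by simp [hd])
    simp only [apply_cons, List.length_append, List.length_cons]
    omega

lemma substIter_succ_eq (σ : A → List A) (n : ℕ) (b : A) :
    substIter σ (n + 1) b = apply (substIter σ n) (σ b) := by
  induction n generalizing b with
  | zero => simp [substIter, apply_singleton_fun]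
  | succ n ih =>
    change apply σ (substIter σ (n + 1) b) = _
    rw [ih, apply_apply]
    rfl

/-! ### Factors and prefixes of sequences -/

@[simp] lemma length_factorAt (x : ℕ → A) (i n : ℕ) : (factorAt x i n).length = n := by
  simp [factorAt]

@[simp] lemma factorAt_zero (x : ℕ → A) (i : ℕ) : factorAt x i 0 = [] := rfl

lemma factorAt_add (x : ℕ → A) (i m n : ℕ) :
    factorAt x i (m + n) = factorAt x i m ++ factorAt x (i + m) n := by
  simp [factorAt, List.range_add, add_assoc]

lemma factorAt_one (x : ℕ → A) (i : ℕ) : factorAt x i 1 = [x i] := by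
  simp [factorAt]

lemma factorAt_isPrefix (x : ℕ → A) (i : ℕ) {m n : ℕ} (h : m ≤ n) :
    factorAt x i m <+: factorAt x i n := by
  obtain ⟨k, rfl⟩ := Nat.exists_eq_add_of_le h
  simp [factorAt_add]

lemma mem_factorAt {x : ℕ → A} {i n : ℕ} {c : A} (h : c ∈ factorAt x i n) : ∃ k, x k = c := by
  simp only [factorAt, List.mem_map] at h
  obtain ⟨k, -, h⟩ := h
  exact ⟨_, h⟩

lemma prefix_factorAt_iff {x : ℕ → A} {w : List A} {i n : ℕ} :
    w <+: factorAt x i n ↔ w.length ≤ n ∧ OccursAt x w i := by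
  constructor
  · intro h
    have hl : w.length ≤ n := by simpa using h.length_le
    refine ⟨hl, ?_⟩
    have h2 := List.prefix_of_prefix_length_le h (factorAt_isPrefix x i hl) (by simp)
    exact (h2.eq_of_length (by simp)).symm
  · rintro ⟨hl, h⟩
    have := factorAt_isPrefix x i hl
    rwa [h] at this

lemma OccursAt.of_isPrefix {x : ℕ → A} {v w : List A} {i : ℕ} (h : OccursAt x w i)
    (hv : v <+: w) : OccursAt x v i := by
  rw [← h] at hv
  exact (prefix_factorAt_iff.1 hv).2

lemma OccursAt.prefix_of_le {x : ℕ → A} {v w : List A} {i : ℕ} (hv : OccursAt x v i)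
    (hw : OccursAt x w i) (h : v.length ≤ w.length) : v <+: w := by
  rw [← hw]
  exact prefix_factorAt_iff.2 ⟨h, hv⟩

lemma isPrefixSeq_factorAt (x : ℕ → A) (n : ℕ) : IsPrefixSeq x (factorAt x 0 n) := by
  simp [IsPrefixSeq, OccursAt]

lemma occursAt_append {x : ℕ → A} {v w : List A} {i : ℕ} :
    OccursAt x (v ++ w) i ↔ OccursAt x v i ∧ OccursAt x w (i + v.length) := by
  simp only [OccursAt, List.length_append, factorAt_add]
  constructor
  · intro h
    exact List.append_inj h (by simp)
  · rintro ⟨h1, h2⟩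
    rw [h1, h2]

lemma SeqImage.isPrefixSeq {f : A → List B} {x : ℕ → A} {y : ℕ → B} (h : SeqImage f x y)
    {w : List A} (hw : IsPrefixSeq x w) : IsPrefixSeq y (apply f w) := by
  have := h w.length
  rwa [hw] at this

lemma SeqImage.substIter {σ : A → List A} {x : ℕ → A} (h : SeqImage σ x x) (n : ℕ) :
    SeqImage (substIter σ n) x x := by
  induction n with
  | zero =>
    intro m
    change IsPrefixSeq x (apply (fun c => [c]) _)
    rw [apply_singleton_fun]
    exact isPrefixSeq_factorAt x m
  | succ n ih =>
    intro m
    have h2 := h.isPrefixSeq (ih m)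
    rwa [apply_apply] at h2

/-- If `f` maps `x` to `y`, the image of the factor of `x` at position `i` occurs in `y` right
after the image of the prefix of length `i`. -/
lemma SeqImage.occursAt {f : A → List B} {x : ℕ → A} {y : ℕ → B} (h : SeqImage f x y)
    {w : List A} {i : ℕ} (hw : OccursAt x w i) :
    OccursAt y (apply f w) (apply f (factorAt x 0 i)).length := by
  have h1 : IsPrefixSeq x (factorAt x 0 i ++ w) :=
    occursAt_append.2 ⟨isPrefixSeq_factorAt x i, by simpa using hw⟩
  have h2 := h.isPrefixSeq h1
  rw [apply_append] at h2
  simpa using (occursAt_append.1 h2).2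

/-! ### Primitivity and recurrence -/

lemma mem_apply {f : A → List B} {w : List A} {b : B} :
    b ∈ apply f w ↔ ∃ c ∈ w, b ∈ f c := by
  simp [apply]

lemma mem_substIter_of_pos [Fintype A] [DecidableEq A] {σ : A → List A} {n : ℕ} {i j : A}
    (h : 0 < (incMatrix σ ^ n) i j) : i ∈ substIter σ n j := by
  induction n generalizing i with
  | zero =>
    by_contra hne
    have : i ≠ j := by simpa [substIter] using hne
    simp [Matrix.one_apply_ne this] at h
  | succ n ih =>
    rw [pow_succ', Matrix.mul_apply] at h
    obtain ⟨l, -, hl⟩ := Finset.exists_ne_zero_of_sum_ne_zero h.ne'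
    refine mem_apply.2 ⟨l, ih (Nat.pos_of_ne_zero (right_ne_zero_of_mul hl)), ?_⟩
    exact List.count_pos_iff.1 (Nat.pos_of_ne_zero (left_ne_zero_of_mul hl))

lemma Primitive.ne_nil [Fintype A] [DecidableEq A] {σ : A → List A} (h : Primitive σ) (b : A) :
    σ b ≠ [] := by
  obtain ⟨k, hk, h⟩ := h
  intro hb
  have h1 := mem_substIter_of_pos (h b b)
  obtain ⟨k, rfl⟩ := Nat.exists_eq_add_of_lt hk
  simp [substIter_succ_eq, hb] at h1

lemma substIter_ne_nil {σ : A → List A} (h : ∀ b, σ b ≠ []) (n : ℕ) (b : A) :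
    substIter σ n b ≠ [] := by
  induction n with
  | zero => simp [substIter]
  | succ n ih =>
    have h1 := length_le_apply σ (w := substIter σ n b) fun c _ => h c
    have h2 := List.length_pos_iff.2 ih
    exact List.length_pos_iff.1 (h2.trans_le h1)

/-- A prefix `u` of the fixed point `x` of a primitive prolongable substitution occurs in `x` at
arbitrarily large positions: some power of `σ` maps every letter to a word containing `a`, so `a`
occurs arbitrarily far, and some power maps each such `a` to a word starting with `u`. -/
lemma exists_occursAt_ge [Fintype A] [DecidableEq A]
    {σ : A → List A} {a : A} (hprim : Primitive σ) (hprol : Prolongable σ a)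
    {x : ℕ → A} (hx0 : x 0 = a) (hfix : SeqImage σ x x)
    {u : List A} (hpu : IsPrefixSeq x u) (N : ℕ) : ∃ j, N ≤ j ∧ OccursAt x u j := by
  have hne := hprim.ne_nil
  have hgrow : ∀ n i, i ≤ (apply (substIter σ n) (factorAt x 0 i)).length := fun n i => by
    simpa using length_le_apply (substIter σ n) (w := factorAt x 0 i)
      fun c _ => substIter_ne_nil hne n c
  obtain ⟨i, hi, hia⟩ : ∃ i, N ≤ i ∧ OccursAt x [a] i := by
    obtain ⟨k, hk, hpos⟩ := hprim
    have hmem := mem_substIter_of_pos (hpos a (x N))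
    obtain ⟨s, t, hst⟩ := List.append_of_mem hmem
    have h1 := (hfix.substIter k).occursAt (w := [x N]) (i := N) (by simp [OccursAt, factorAt_one])
    have h2 : substIter σ k (x N) = s ++ ([a] ++ t) := by simpa using hst
    simp only [apply_cons, apply_nil, List.append_nil, h2] at h1
    have h3 := (occursAt_append.1 (occursAt_append.1 h1).2).1
    exact ⟨_, (hgrow k N).trans (Nat.le_add_right _ _), h3⟩
  obtain ⟨n, hn⟩ := (hprol.2.eventually_ge_atTop u.length).exists
  have ha : IsPrefixSeq x (substIter σ n a) := by
    have := hfix.substIter n 1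
    simpa [factorAt_one, hx0] using this
  have h1 := (hfix.substIter n).occursAt hia
  simp only [apply_cons, apply_nil, List.append_nil] at h1
  exact ⟨_, hi.trans (hgrow n i), h1.of_isPrefix (OccursAt.prefix_of_le hpu ha hn)⟩

/-! ### Occurrences of `u`, return words and labels -/

section Occ

variable {x : ℕ → A} {u : List A}

lemma nextOcc_spec (hrec : ∀ N, ∃ j, N ≤ j ∧ OccursAt x u j) (i : ℕ) :
    i < nextOcc x u i ∧ OccursAt x u (nextOcc x u i) := by
  obtain ⟨j, hj, h⟩ := hrec (i + 1)
  exact Nat.sInf_mem (s := {j | i < j ∧ OccursAt x u j}) ⟨j, hj, h⟩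

lemma nextOcc_le {i j : ℕ} (hij : i < j) (h : OccursAt x u j) : nextOcc x u i ≤ j :=
  Nat.sInf_le (s := {j | i < j ∧ OccursAt x u j}) ⟨hij, h⟩

lemma occSeq_strictMono (hrec : ∀ N, ∃ j, N ≤ j ∧ OccursAt x u j) : StrictMono (occSeq x u) :=
  strictMono_nat_of_lt_succ fun n => (nextOcc_spec hrec (occSeq x u n)).1

lemma occursAt_occSeq (hrec : ∀ N, ∃ j, N ≤ j ∧ OccursAt x u j) (hpu : IsPrefixSeq x u) (n : ℕ) :
    OccursAt x u (occSeq x u n) := by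
  cases n with
  | zero => exact hpu
  | succ n => exact (nextOcc_spec hrec (occSeq x u n)).2

lemma exists_occSeq_eq (hrec : ∀ N, ∃ j, N ≤ j ∧ OccursAt x u j) {i : ℕ} (h : OccursAt x u i) :
    ∃ n, occSeq x u n = i := by
  have hex : ∃ n, i ≤ occSeq x u n := ⟨i, (occSeq_strictMono hrec).id_le i⟩
  refine ⟨Nat.find hex, le_antisymm ?_ (Nat.find_spec hex)⟩
  rcases hn : Nat.find hex with _ | n
  · exact Nat.zero_le _
  · exact nextOcc_le (not_le.1 (Nat.find_min hex (m := n) (by omega))) h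

lemma factorAt_occSeq_succ (hrec : ∀ N, ∃ j, N ≤ j ∧ OccursAt x u j) (n : ℕ) :
    factorAt x 0 (occSeq x u (n + 1)) = factorAt x 0 (occSeq x u n) ++ retWord x u n := by
  have := occSeq_strictMono hrec (Nat.lt_succ_self n)
  have h : occSeq x u (n + 1) = occSeq x u n + (occSeq x u (n + 1) - occSeq x u n) := by
    simp only [Nat.succ_eq_add_one] at this
    omega
  conv_lhs => rw [h, factorAt_add]
  simp [retWord]

lemma retWord_firstIdx (n : ℕ) : retWord x u (firstIdx x u (retWord x u n)) = retWord x u n :=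
  Nat.sInf_mem (s := {m | retWord x u m = retWord x u n}) ⟨n, rfl⟩

lemma retWord_eq_of_derivedSeq_eq {m n : ℕ} (h : derivedSeq x u m = derivedSeq x u n) :
    retWord x u m = retWord x u n := by
  classical
  -- A return word appearing first strictly later has a strictly larger label, because the earlier
  -- one is counted in its label but not in its own.
  have key : ∀ m n, firstIdx x u (retWord x u m) < firstIdx x u (retWord x u n) →
      derivedSeq x u m < derivedSeq x u n := by
    intro m n hlt
    unfold derivedSeq
    convert Finset.card_lt_card (s := (Finset.range (firstIdx x u (retWord x u m))).image
      (retWord x u)) (t := (Finset.range (firstIdx x u (retWord x u n))).image (retWord x u)) ?_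
    refine Finset.ssubset_iff_subset_ne.2 ⟨Finset.image_subset_image
      (Finset.range_subset_range.2 hlt.le), fun heq => ?_⟩
    have hmem : retWord x u m ∈ (Finset.range (firstIdx x u (retWord x u n))).image
        (retWord x u) :=
      Finset.mem_image.2 ⟨_, Finset.mem_range.2 hlt, retWord_firstIdx m⟩
    rw [← heq] at hmem
    obtain ⟨k, hk, hkm⟩ := Finset.mem_image.1 hmem
    have h1 : firstIdx x u (retWord x u m) ≤ k :=
      Nat.sInf_le (s := {l | retWord x u l = retWord x u m}) hkm
    exact absurd (Finset.mem_range.1 hk) (not_lt.2 h1)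
  rcases lt_trichotomy (firstIdx x u (retWord x u m)) (firstIdx x u (retWord x u n)) with h1 | h1 | h1
  · exact absurd h (key _ _ h1).ne
  · rw [← retWord_firstIdx m, h1, retWord_firstIdx]
  · exact absurd h (key _ _ h1).ne'

lemma thetaLetter_derivedSeq (n : ℕ) : thetaLetter x u (derivedSeq x u n) = retWord x u n :=
  retWord_eq_of_derivedSeq_eq
    (Nat.sInf_mem (s := {m | derivedSeq x u m = derivedSeq x u n}) ⟨n, rfl⟩)

lemma thetaLetter_injOn {k l : ℕ} (hk : k ∈ derivedAlphabet x u) (hl : l ∈ derivedAlphabet x u)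
    (h : thetaLetter x u k = thetaLetter x u l) : k = l := by
  obtain ⟨m, rfl⟩ := hk
  obtain ⟨n, rfl⟩ := hl
  rw [thetaLetter_derivedSeq, thetaLetter_derivedSeq] at h
  simp only [derivedSeq, h]

lemma theta_factorAt (hrec : ∀ N, ∃ j, N ≤ j ∧ OccursAt x u j) (n : ℕ) :
    theta x u (factorAt (derivedSeq x u) 0 n) = factorAt x 0 (occSeq x u n) := by
  induction n with
  | zero => rfl
  | succ n ih =>
    rw [factorAt_occSeq_succ hrec, ← ih, factorAt_add, theta, theta, apply_append]
    simp [factorAt_one, thetaLetter_derivedSeq]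

lemma theta_factorAt_of_le (hrec : ∀ N, ∃ j, N ≤ j ∧ OccursAt x u j) {p q : ℕ} (hpq : p ≤ q) :
    factorAt x 0 (occSeq x u p) ++ theta x u (factorAt (derivedSeq x u) p (q - p)) =
      factorAt x 0 (occSeq x u q) := by
  obtain ⟨k, rfl⟩ := Nat.exists_eq_add_of_le hpq
  rw [← theta_factorAt hrec, ← theta_factorAt hrec, factorAt_add, theta, theta, theta,
    apply_append]
  simp

/-! ### Return words form a code -/

lemma thetaLetter_ne_nil (hrec : ∀ N, ∃ j, N ≤ j ∧ OccursAt x u j) {k : ℕ}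
    (hk : k ∈ derivedAlphabet x u) : thetaLetter x u k ≠ [] := by
  obtain ⟨n, rfl⟩ := hk
  rw [thetaLetter_derivedSeq, ← List.length_pos_iff, retWord, length_factorAt]
  exact Nat.sub_pos_of_lt (occSeq_strictMono hrec (Nat.lt_succ_self n))

/-- If `r` is a return word to `u`, the word `r ++ u` occurs in `x` at an occurrence `i` of `u`
whose successor is `i + |r|`. -/
lemma occursAt_thetaLetter_append (hrec : ∀ N, ∃ j, N ≤ j ∧ OccursAt x u j)
    (hpu : IsPrefixSeq x u) {k : ℕ} (hk : k ∈ derivedAlphabet x u) :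
    ∃ i, OccursAt x u i ∧ OccursAt x (thetaLetter x u k ++ u) i ∧
      nextOcc x u i = i + (thetaLetter x u k).length := by
  obtain ⟨n, rfl⟩ := hk
  have hlt := (nextOcc_spec hrec (occSeq x u n)).1
  have hlen : nextOcc x u (occSeq x u n) =
      occSeq x u n + (thetaLetter x u (derivedSeq x u n)).length := by
    rw [thetaLetter_derivedSeq, retWord, length_factorAt, occSeq]
    omega
  refine ⟨occSeq x u n, occursAt_occSeq hrec hpu n, occursAt_append.2 ⟨?_, ?_⟩, hlen⟩
  · rw [thetaLetter_derivedSeq]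
    simp [OccursAt, retWord]
  · rw [← hlen]
    exact (nextOcc_spec hrec _).2

lemma prefix_thetaLetter_append (hrec : ∀ N, ∃ j, N ≤ j ∧ OccursAt x u j)
    (hpu : IsPrefixSeq x u) {k : ℕ} (hk : k ∈ derivedAlphabet x u) :
    u <+: thetaLetter x u k ++ u := by
  obtain ⟨i, h1, h2, -⟩ := occursAt_thetaLetter_append hrec hpu hk
  exact h1.prefix_of_le h2 (by simp)

lemma prefix_theta_append (hrec : ∀ N, ∃ j, N ≤ j ∧ OccursAt x u j)
    (hpu : IsPrefixSeq x u) {l : List ℕ} (hl : ∀ c ∈ l, c ∈ derivedAlphabet x u) :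
    u <+: theta x u l ++ u := by
  induction l with
  | nil => simp [theta]
  | cons c t ih =>
    have h1 := ih fun d hd => hl d (by simp [hd])
    have h2 := prefix_thetaLetter_append hrec hpu (hl c (by simp))
    simp only [theta, apply_cons, List.append_assoc] at h1 ⊢
    exact h2.trans ((List.prefix_append_right_inj _).2 h1)

/-- If `r ++ u` and `r' ++ u`, with `r, r'` return words, are prefixes of the same word, then `r`
is not shorter than `r'`: otherwise `u` would occur strictly inside `r' ++ u`. -/
lemma length_thetaLetter_le (hrec : ∀ N, ∃ j, N ≤ j ∧ OccursAt x u j)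
    (hpu : IsPrefixSeq x u) {k l : ℕ} (hk : k ∈ derivedAlphabet x u)
    (hl : l ∈ derivedAlphabet x u) {w : List A} (h1 : thetaLetter x u k ++ u <+: w)
    (h2 : thetaLetter x u l ++ u <+: w) :
    (thetaLetter x u l).length ≤ (thetaLetter x u k).length := by
  by_contra hlt
  have h3 := List.prefix_of_prefix_length_le h1 h2 (by simp; omega)
  obtain ⟨i, -, h4, h5⟩ := occursAt_thetaLetter_append hrec hpu hl
  have h6 := (occursAt_append.1 (h4.of_isPrefix h3)).2
  have h7 := List.length_pos_iff.2 (thetaLetter_ne_nil hrec hk)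
  have h8 := nextOcc_le (i := i) (by omega) h6
  omega

/-- Unique decoding: `Θ` reflects the prefix order on words over the derived alphabet, once
both images are completed by `u`. -/
lemma isPrefix_of_theta (hrec : ∀ N, ∃ j, N ≤ j ∧ OccursAt x u j)
    (hpu : IsPrefixSeq x u) {l l' : List ℕ} (hl : ∀ c ∈ l, c ∈ derivedAlphabet x u)
    (hl' : ∀ c ∈ l', c ∈ derivedAlphabet x u) (h : theta x u l ++ u <+: theta x u l' ++ u) :
    l <+: l' := by
  induction l generalizing l' with
  | nil => simp
  | cons c t ih =>
    have hc : c ∈ derivedAlphabet x u := hl c (by simp)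
    have ht : ∀ d ∈ t, d ∈ derivedAlphabet x u := fun d hd => hl d (by simp [hd])
    cases l' with
    | nil =>
      have h1 := h.length_le
      have h2 := List.length_pos_iff.2 (thetaLetter_ne_nil hrec hc)
      simp only [theta, apply_cons, apply_nil, List.nil_append, List.length_append] at h1
      omega
    | cons c' t' =>
      have hc' : c' ∈ derivedAlphabet x u := hl' c' (by simp)
      have ht' : ∀ d ∈ t', d ∈ derivedAlphabet x u := fun d hd => hl' d (by simp [hd])
      have hu := prefix_theta_append hrec hpu ht
      have hu' := prefix_theta_append hrec hpu ht'
      simp only [theta, apply_cons, List.append_assoc] at h hu hu'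
      have h1 := ((List.prefix_append_right_inj (thetaLetter x u c)).2 hu).trans h
      have h2 := (List.prefix_append_right_inj (thetaLetter x u c')).2 hu'
      have h3 := le_antisymm (length_thetaLetter_le hrec hpu hc' hc h2 h1)
        (length_thetaLetter_le hrec hpu hc hc' h1 h2)
      have h4 := (List.prefix_of_prefix_length_le h1 h2 (by simp [h3])).eq_of_length (by simp [h3])
      have h5 := List.append_cancel_right h4
      obtain rfl := thetaLetter_injOn hc hc' h5
      exact (List.prefix_append_right_inj [c]).2
        (ih ht ht' ((List.prefix_append_right_inj _).1 h))

lemma theta_injOn (hrec : ∀ N, ∃ j, N ≤ j ∧ OccursAt x u j)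
    (hpu : IsPrefixSeq x u) {l l' : List ℕ} (hl : ∀ c ∈ l, c ∈ derivedAlphabet x u)
    (hl' : ∀ c ∈ l', c ∈ derivedAlphabet x u) (h : theta x u l = theta x u l') : l = l' := by
  have h1 := isPrefix_of_theta hrec hpu hl hl' (by rw [h])
  have h2 := isPrefix_of_theta hrec hpu hl' hl (by rw [h])
  exact h1.eq_of_length (le_antisymm h1.length_le h2.length_le)

/-! ### The return substitution -/

lemma theta_apply {σ : A → List A} {g : ℕ → List ℕ}
    (hg : ∀ k ∈ derivedAlphabet x u, theta x u (g k) = apply σ (thetaLetter x u k))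
    {l : List ℕ} (hl : ∀ c ∈ l, c ∈ derivedAlphabet x u) :
    theta x u (apply g l) = apply σ (theta x u l) := by
  induction l with
  | nil => rfl
  | cons c t ih =>
    have h1 := ih fun d hd => hl d (by simp [hd])
    have h2 := hg c (hl c (by simp))
    simp only [theta] at h1 h2 ⊢
    simp [h1, h2]

/-- `σ` maps occurrences of `u` to occurrences of `u`: the image of such an occurrence starts a
copy of `σ(u)`, of which `u` is a prefix. -/
lemma exists_occSeq_eq_apply {σ : A → List A} (hne : ∀ b, σ b ≠ []) (hfix : SeqImage σ x x)
    (hrec : ∀ N, ∃ j, N ≤ j ∧ OccursAt x u j) (hpu : IsPrefixSeq x u) (n : ℕ) :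
    ∃ p, occSeq x u p = (apply σ (factorAt x 0 (occSeq x u n))).length ∧
      factorAt x 0 (occSeq x u p) = apply σ (factorAt x 0 (occSeq x u n)) := by
  have h1 := hfix.occursAt (occursAt_occSeq hrec hpu n)
  have h2 : u <+: apply σ u := OccursAt.prefix_of_le hpu (hfix.isPrefixSeq hpu)
    (length_le_apply σ fun c _ => hne c)
  obtain ⟨p, hp⟩ := exists_occSeq_eq hrec (h1.of_isPrefix h2)
  refine ⟨p, hp, ?_⟩
  rw [hp]
  exact hfix _

lemma exists_theta_eq_apply {σ : A → List A} (hne : ∀ b, σ b ≠ []) (hfix : SeqImage σ x x)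
    (hrec : ∀ N, ∃ j, N ≤ j ∧ OccursAt x u j) (hpu : IsPrefixSeq x u) {k : ℕ}
    (hk : k ∈ derivedAlphabet x u) :
    ∃ l : List ℕ, (∀ c ∈ l, c ∈ derivedAlphabet x u) ∧
      theta x u l = apply σ (thetaLetter x u k) := by
  obtain ⟨n, rfl⟩ := hk
  obtain ⟨p, hp1, hp⟩ := exists_occSeq_eq_apply hne hfix hrec hpu n
  obtain ⟨q, hq1, hq⟩ := exists_occSeq_eq_apply hne hfix hrec hpu (n + 1)
  rw [factorAt_occSeq_succ hrec, apply_append] at hq hq1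
  have hpq : p ≤ q := by
    rw [← (occSeq_strictMono hrec).le_iff_le, hp1, hq1]
    simp
  refine ⟨factorAt (derivedSeq x u) p (q - p), fun c hc => mem_factorAt hc, ?_⟩
  rw [← theta_factorAt_of_le hrec hpq, hp] at hq
  rw [thetaLetter_derivedSeq]
  exact List.append_cancel_left hq

/-- The images under `Θ` of the prefixes of a fixed point `z` of the return substitution start
with arbitrarily long prefixes `σᴺ(a)` of `x`. -/
lemma exists_substIter_isPrefix_theta {σ : A → List A} {g : ℕ → List ℕ}
    (hg : ∀ k ∈ derivedAlphabet x u, theta x u (g k) = apply σ (thetaLetter x u k))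
    (hrec : ∀ N, ∃ j, N ≤ j ∧ OccursAt x u j) (hu : u ≠ []) (hpu : IsPrefixSeq x u)
    {z : ℕ → ℕ} (hz : ∀ n, z n ∈ derivedAlphabet x u) (hgz : SeqImage g z z) (N : ℕ) :
    ∃ m, substIter σ N (x 0) <+: theta x u (factorAt z 0 m) := by
  induction N with
  | zero =>
    refine ⟨1, ?_⟩
    have h1 := prefix_thetaLetter_append hrec hpu (hz 0)
    have h0 := thetaLetter_ne_nil hrec (hz 0)
    have h2 : [x 0] <+: u := OccursAt.prefix_of_le (x := x) (i := 0)
      (by simp [OccursAt, factorAt_one]) hpu (List.length_pos_iff.2 hu)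
    have h3 : [x 0] <+: thetaLetter x u (z 0) :=
      List.prefix_of_prefix_length_le (h2.trans h1) (List.prefix_append _ _)
        (List.length_pos_iff.2 h0)
    simpa [substIter, factorAt_one, theta] using h3
  | succ N ih =>
    obtain ⟨m, hm⟩ := ih
    refine ⟨(apply g (factorAt z 0 m)).length, ?_⟩
    rw [hgz m, theta_apply hg]
    · exact apply_isPrefix σ hm
    · intro c hc
      obtain ⟨k, rfl⟩ := mem_factorAt hc
      exact hz k

lemma theta_append_isPrefix (hrec : ∀ N, ∃ j, N ≤ j ∧ OccursAt x u j) (hpu : IsPrefixSeq x u)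
    {z : ℕ → ℕ} (hz : ∀ n, z n ∈ derivedAlphabet x u) {m n : ℕ} (h : m ≤ n) :
    theta x u (factorAt z 0 m) ++ u <+: theta x u (factorAt z 0 n) ++ u := by
  obtain ⟨k, rfl⟩ := Nat.exists_eq_add_of_le h
  have h1 := prefix_theta_append (l := factorAt z (0 + m) k) hrec hpu fun c hc => by
    obtain ⟨k, rfl⟩ := mem_factorAt hc
    exact hz k
  rw [factorAt_add, theta, theta, apply_append, List.append_assoc]
  exact (List.prefix_append_right_inj _).2 h1

lemma eq_derivedSeq {σ : A → List A} {g : ℕ → List ℕ}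
    (hg : ∀ k ∈ derivedAlphabet x u, theta x u (g k) = apply σ (thetaLetter x u k))
    (hprol : Prolongable σ (x 0)) (hfix : SeqImage σ x x)
    (hrec : ∀ N, ∃ j, N ≤ j ∧ OccursAt x u j) (hu : u ≠ []) (hpu : IsPrefixSeq x u)
    {z : ℕ → ℕ} (hz : ∀ n, z n ∈ derivedAlphabet x u) (hgz : SeqImage g z z) :
    z = derivedSeq x u := by
  have hmem : ∀ m, ∀ c ∈ factorAt z 0 m, c ∈ derivedAlphabet x u := by
    intro m c hc
    obtain ⟨k, rfl⟩ := mem_factorAt hc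
    exact hz k
  have hW : ∀ n, IsPrefixSeq x (theta x u (factorAt z 0 n) ++ u) := by
    intro n
    obtain ⟨N, hN⟩ := (hprol.2.eventually_ge_atTop
      (theta x u (factorAt z 0 n) ++ u).length).exists
    obtain ⟨m, hm⟩ := exists_substIter_isPrefix_theta hg hrec hu hpu hz hgz N
    have h1 := (hm.trans (List.prefix_append _ u)).trans
      (theta_append_isPrefix hrec hpu hz (le_max_left m n))
    have h2 := theta_append_isPrefix hrec hpu hz (le_max_right m n)
    have h3 : IsPrefixSeq x (substIter σ N (x 0)) := by
      have := hfix.substIter N 1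
      simpa [factorAt_one] using this
    exact OccursAt.of_isPrefix h3 (List.prefix_of_prefix_length_le h2 h1 hN)
  funext n
  set L := (theta x u (factorAt z 0 (n + 1)) ++ u).length
  have hx : IsPrefixSeq x (theta x u (factorAt (derivedSeq x u) 0 (max L (n + 1))) ++ u) := by
    rw [theta_factorAt hrec]
    refine occursAt_append.2 ⟨isPrefixSeq_factorAt _ _, ?_⟩
    simpa using occursAt_occSeq hrec hpu (max L (n + 1))
  have hlen : L ≤ (theta x u (factorAt (derivedSeq x u) 0 (max L (n + 1))) ++ u).length := by
    rw [theta_factorAt hrec, List.length_append, length_factorAt]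
    have := (occSeq_strictMono hrec).id_le (max L (n + 1))
    simp only [id_eq] at this
    omega
  have h1 := isPrefix_of_theta hrec hpu (hmem _) (fun c hc => mem_factorAt hc)
    (OccursAt.prefix_of_le (hW (n + 1)) hx hlen)
  have h2 := (prefix_factorAt_iff.1 h1).2
  rw [factorAt_add] at h2
  have h3 := (occursAt_append.1 h2).2
  simpa [OccursAt, factorAt_one] using h3.symm

end Occ

/-- Let `σ` be a primitive substitution prolongable on `a`, let
`x = σ^ω(a)` (the unique fixed point of `σ` starting with `a`) and let `u` be a
nonempty prefix of `x`. Then there is a unique substitution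
`σ_u : R_{x,u}* → R_{x,u}*` with `Θ_{x,u} ∘ σ_u = σ ∘ Θ_{x,u}`, and the derived
sequence `D_u(x)` is the unique fixed point of `σ_u`. -/
theorem return_substitution_exists_unique {A : Type*} [Fintype A] [DecidableEq A]
    (σ : A → List A) (a : A) (hprim : Primitive σ) (hprol : Prolongable σ a)
    (x : ℕ → A) (hx0 : x 0 = a) (hfix : SeqImage σ x x)
    (u : List A) (hu : u ≠ []) (hpu : IsPrefixSeq x u) :
    ∃ g : ℕ → List ℕ,
      (∀ k ∈ derivedAlphabet x u, ∀ c ∈ g k, c ∈ derivedAlphabet x u) ∧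
      (∀ k ∈ derivedAlphabet x u, theta x u (g k) = apply σ (thetaLetter x u k)) ∧
      (∀ g' : ℕ → List ℕ,
        (∀ k ∈ derivedAlphabet x u, ∀ c ∈ g' k, c ∈ derivedAlphabet x u) →
        (∀ k ∈ derivedAlphabet x u, theta x u (g' k) = apply σ (thetaLetter x u k)) →
        ∀ k ∈ derivedAlphabet x u, g' k = g k) ∧
      SeqImage g (derivedSeq x u) (derivedSeq x u) ∧
      (∀ z : ℕ → ℕ, (∀ n, z n ∈ derivedAlphabet x u) → SeqImage g z z →
        z = derivedSeq x u) := by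
  have hne := hprim.ne_nil
  have hrec := exists_occursAt_ge hprim hprol hx0 hfix hpu
  subst hx0
  have hex : ∀ k, ∃ l : List ℕ, k ∈ derivedAlphabet x u →
      (∀ c ∈ l, c ∈ derivedAlphabet x u) ∧ theta x u l = apply σ (thetaLetter x u k) := by
    intro k
    by_cases hk : k ∈ derivedAlphabet x u
    · obtain ⟨l, hl⟩ := exists_theta_eq_apply hne hfix hrec hpu hk
      exact ⟨l, fun _ => hl⟩
    · exact ⟨[], fun h => absurd h hk⟩
  choose g hg using hex
  have hgθ := fun k hk => (hg k hk).2
  refine ⟨g, fun k hk => (hg k hk).1, hgθ, fun g' h1 h2 k hk => ?_, fun n => ?_,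
    fun z hz hgz => eq_derivedSeq hgθ hprol hfix hrec hu hpu hz hgz⟩
  · exact theta_injOn hrec hpu (h1 k hk) (hg k hk).1 ((h2 k hk).trans (hgθ k hk).symm)
  -- `Θ(σ_u(d₀⋯dₙ₋₁)) = σ(Θ(d₀⋯dₙ₋₁))` is a prefix of `x` ending at an occurrence of `u`, so it
  -- equals `Θ(d₀⋯dₚ₋₁)` for some `p`, and injectivity of `Θ` applies.
  · obtain ⟨p, -, hp⟩ := exists_occSeq_eq_apply hne hfix hrec hpu n
    have hmem : ∀ n, ∀ c ∈ factorAt (derivedSeq x u) 0 n, c ∈ derivedAlphabet x u :=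
      fun n c hc => mem_factorAt hc
    have h1 : apply g (factorAt (derivedSeq x u) 0 n) = factorAt (derivedSeq x u) 0 p := by
      refine theta_injOn hrec hpu (fun c hc => ?_) (hmem p) ?_
      · obtain ⟨k, hk, hck⟩ := mem_apply.1 hc
        exact (hg k (hmem n k hk)).1 c hck
      · rw [theta_apply hgθ (hmem n), theta_factorAt hrec, theta_factorAt hrec, hp]
    rw [h1]
    exact isPrefixSeq_factorAt _ p
end Rauzy
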